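/- Let X be a proper, geodesic Ptolemy metric space and let A ⊂ X be a nonempty closed convex subset. Then for every x ∈ X there is a unique point π(x) ∈ A with |x π(x)| = dist(x, A), and the nearest-point projection π : X → A is continuous. -/

import Mathlib

/-!
The heart of the matter is strict convexity of balls (`eq_of_midpoints_far`): if `p ≠ q` both lie
at distance `D` from `x`, then some midpoint of `p` and `q` is at distance less than `D` from `x`.

Let `|pq| = 2a`, and suppose every midpoint of `p, q` is at distance at least `D` from `x`. Move
`p` and `q` towards `x` by `ε`, to `P` and `Q`, and let `M` be a midpoint of `P, Q`, with
`|PM| = |MQ| = h`. By properness, `M` accumulates as `ε → 0` at a midpoint `m` of `p, q`; put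
`δ = |mM|`. The Ptolemy inequality gives
* `D · 2h ≤ |xm| |PQ| ≤ (D - ε)(|Pm| + |Qm|)`,
* `|Pm| |pM| ≤ εδ + ah` and `|Qm| |qM| ≤ εδ + ah`.

Since `|pM| + |qM| ≥ 2a` and `|pM|`, `|qM|` differ from `h` by at most `ε`, the last two bounds
say `|Pm| + |Qm| ≤ 2h + o(ε)`, which contradicts the first one. The exact form of the outcome is
`a²h ≤ Dδa + Dhε` (`ptolemy_estimate`), whose limit is `a³ ≤ 0`.

Two nearest points of a convex set would violate strict convexity, so the nearest point is unique.
Its existence, and the continuity of the projection, follow from properness by compactness.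
-/

/-- A metric space is Ptolemy if `|xy|·|uv| ≤ |xu|·|yv| + |xv|·|yu|` for all points. -/
def IsPtolemy (X : Type*) [MetricSpace X] : Prop :=
  ∀ x y u v : X, dist x y * dist u v ≤ dist x u * dist y v + dist x v * dist y u

/-- `c` is a geodesic on `I` (parameterized proportionally to arclength with speed `l ≥ 0`). -/
def IsGeodesicOn {X : Type*} [MetricSpace X] (c : ℝ → X) (I : Set ℝ) : Prop :=
  ∃ l : ℝ, 0 ≤ l ∧ ∀ s ∈ I, ∀ t ∈ I, dist (c s) (c t) = l * |s - t|

/-- A metric space is geodesic if every pair of points is joined by a geodesic. -/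
def IsGeodesicSpace (X : Type*) [MetricSpace X] : Prop :=
  ∀ x y : X, ∃ c : ℝ → X, c 0 = x ∧ c 1 = y ∧ IsGeodesicOn c (Set.Icc 0 1)

/-- A subset is convex if it contains every midpoint of each pair of its points. -/
def MidpointConvexSet {X : Type*} [MetricSpace X] (A : Set X) : Prop :=
  ∀ x ∈ A, ∀ y ∈ A, ∀ m : X, dist x m = dist x y / 2 → dist m y = dist x y / 2 → m ∈ A

/-- The Ptolemy inequalities of the perturbed configuration, combined. Here `U = |Pm|`,
`V = |Qm|`, `A = |pM|`, `B = |qM|`. -/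
lemma ptolemy_estimate {D ε δ a h U V A B : ℝ} (hε : 0 < ε) (hεa : ε < a) (hεD : ε ≤ D)
    (hδ : 0 ≤ δ) (hh : 0 ≤ h) (h1 : D * (2 * h) ≤ (D - ε) * (U + V))
    (hU : U * A ≤ ε * δ + a * h) (hV : V * B ≤ ε * δ + a * h)
    (hAB : 2 * a ≤ A + B) (hd1 : A - B ≤ 2 * ε) (hd2 : B - A ≤ 2 * ε) :
    a ^ 2 * h ≤ D * δ * a + D * h * ε := by
  have hA : 0 < A := by linarith
  have hB : 0 < B := by linarith
  have ha : 0 < a := hε.trans hεa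
  set K := ε * δ + a * h with hK
  have hK0 : 0 ≤ K := by positivity
  have hsum : (U + V) * (A * B) ≤ K * (A + B) := by nlinarith
  have hdsq : (A - B) ^ 2 ≤ 4 * ε ^ 2 := by nlinarith
  -- For fixed `A - B`, the quantity `(A + B) / (A * B)` decreases in `A + B`.
  have hkey : (A + B) * (a ^ 2 - ε ^ 2) ≤ 2 * a * (A * B) := by
    have : 0 ≤ (A + B - 2 * a) * (a * (A + B) / 2 + ε ^ 2) :=
      mul_nonneg (by linarith) (by positivity)
    nlinarith [mul_le_mul_of_nonneg_left hdsq ha.le]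
  have haε : 0 < a ^ 2 - ε ^ 2 := by nlinarith
  have hUV : (U + V) * (a ^ 2 - ε ^ 2) ≤ 2 * a * K := by
    have h3 : (U + V) * (a ^ 2 - ε ^ 2) * (A * B) ≤ 2 * a * K * (A * B) := by
      calc (U + V) * (a ^ 2 - ε ^ 2) * (A * B)
          = (U + V) * (A * B) * (a ^ 2 - ε ^ 2) := by ring
        _ ≤ K * (A + B) * (a ^ 2 - ε ^ 2) := by gcongr
        _ = K * ((A + B) * (a ^ 2 - ε ^ 2)) := by ring
        _ ≤ K * (2 * a * (A * B)) := by gcongr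
        _ = 2 * a * K * (A * B) := by ring
    exact le_of_mul_le_mul_right h3 (by positivity)
  have h4 : D * (2 * h) * (a ^ 2 - ε ^ 2) ≤ (D - ε) * (2 * a * K) := by
    calc D * (2 * h) * (a ^ 2 - ε ^ 2) ≤ (D - ε) * (U + V) * (a ^ 2 - ε ^ 2) := by gcongr
      _ = (D - ε) * ((U + V) * (a ^ 2 - ε ^ 2)) := by ring
      _ ≤ _ := mul_le_mul_of_nonneg_left hUV (by linarith)
  have h5 : 0 ≤ ε ^ 2 * δ * a := by positivity
  have h6 : ε * (a ^ 2 * h) ≤ ε * (D * δ * a + D * h * ε) := by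
    rw [hK] at h4
    nlinarith
  exact le_of_mul_le_mul_left h6 hε

lemma IsGeodesicSpace.exists_between {X : Type*} [MetricSpace X] (hgeo : IsGeodesicSpace X)
    (x p : X) {ε : ℝ} (h0 : 0 ≤ ε) (h1 : ε ≤ dist x p) :
    ∃ u, dist x u = dist x p - ε ∧ dist p u = ε := by
  obtain ⟨c, rfl, rfl, l, hl, hc⟩ := hgeo x p
  have hl' : dist (c 0) (c 1) = l := by
    rw [hc 0 (by simp) 1 (by simp)]; simp
  rw [hl'] at h1 ⊢
  rcases hl.eq_or_lt with rfl | hlpos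
  · obtain rfl : ε = 0 := le_antisymm h1 h0
    exact ⟨c 1, by simpa using hl', by simp⟩
  · have hr0 : 0 ≤ ε / l := by positivity
    have hr1 : ε / l ≤ 1 := (div_le_one hlpos).2 h1
    have ht : 1 - ε / l ∈ Set.Icc (0 : ℝ) 1 := ⟨by linarith, by linarith⟩
    refine ⟨c (1 - ε / l), ?_, ?_⟩
    · rw [hc 0 (by simp) _ ht, zero_sub, abs_neg, abs_of_nonneg ht.1]
      field_simp
    · rw [hc 1 (by simp) _ ht, sub_sub_cancel, abs_of_nonneg hr0]
      field_simp

lemma IsGeodesicSpace.exists_midpoint {X : Type*} [MetricSpace X] (hgeo : IsGeodesicSpace X)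
    (p q : X) : ∃ m, dist p m = dist p q / 2 ∧ dist m q = dist p q / 2 := by
  have h0 : 0 ≤ dist p q := dist_nonneg
  obtain ⟨m, h1, h2⟩ := hgeo.exists_between p q (ε := dist p q / 2) (by linarith) (by linarith)
  exact ⟨m, by linarith, by rw [dist_comm, h2]⟩

/-- Strict convexity of balls: two distinct points on a sphere about `x` have a midpoint strictly
inside that sphere. -/
lemma eq_of_midpoints_far {X : Type*} [MetricSpace X] [ProperSpace X]
    (hgeo : IsGeodesicSpace X) (hpt : IsPtolemy X) {x p q : X} {D : ℝ}
    (hp : dist x p = D) (hq : dist x q = D)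
    (hmid : ∀ m, dist p m = dist p q / 2 → dist m q = dist p q / 2 → D ≤ dist x m) :
    p = q := by
  by_contra hne
  obtain ⟨a, ha⟩ : ∃ a, a = dist p q / 2 := ⟨_, rfl⟩
  have hapos : 0 < a := by rw [ha]; exact half_pos (dist_pos.2 hne)
  have hDa : a ≤ D := by
    have := dist_triangle p x q
    rw [dist_comm p x] at this
    linarith
  have hD : 0 < D := hapos.trans_le hDa
  set e : ℕ → ℝ := fun n => a / ((n : ℝ) + 2) with he
  have hepos : ∀ n, 0 < e n := fun n => by positivity
  have hea : ∀ n, e n < a := fun n => div_lt_self hapos (by linarith [n.cast_nonneg (α := ℝ)])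
  have he0 : Filter.Tendsto e Filter.atTop (nhds 0) :=
    tendsto_const_nhds.div_atTop
      (Filter.tendsto_atTop_add_const_right _ _ tendsto_natCast_atTop_atTop)
  have hP : ∀ n, ∃ u, dist x u = D - e n ∧ dist p u = e n := fun n => by
    have := hgeo.exists_between x p (hepos n).le (by linarith [hea n])
    rwa [hp] at this
  have hQ : ∀ n, ∃ u, dist x u = D - e n ∧ dist q u = e n := fun n => by
    have := hgeo.exists_between x q (hepos n).le (by linarith [hea n])
    rwa [hq] at this
  choose P hxP hpP using hP
  choose Q hxQ hqQ using hQ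
  choose M hPM hMQ using fun n => hgeo.exists_midpoint (P n) (Q n)
  have hPt : Filter.Tendsto P Filter.atTop (nhds p) := by
    rw [tendsto_iff_dist_tendsto_zero]
    simpa only [dist_comm (P _) p, hpP] using he0
  have hQt : Filter.Tendsto Q Filter.atTop (nhds q) := by
    rw [tendsto_iff_dist_tendsto_zero]
    simpa only [dist_comm (Q _) q, hqQ] using he0
  have hMb : ∀ n, M n ∈ Metric.closedBall p (4 * a) := fun n => by
    rw [Metric.mem_closedBall, dist_comm]
    have h1 := dist_triangle p (P n) (M n)
    have h2 := dist_triangle4 (P n) p q (Q n)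
    rw [dist_comm (P n) p] at h2
    linarith [hpP n, hqQ n, hPM n, hea n]
  obtain ⟨m, -, φ, hφ, hm⟩ := tendsto_subseq_of_bounded Metric.isBounded_closedBall hMb
  have hφt := hφ.tendsto_atTop
  have hht : Filter.Tendsto (fun n => dist (P (φ n)) (Q (φ n)) / 2) Filter.atTop (nhds a) := by
    rw [ha]
    exact ((hPt.comp hφt).dist (hQt.comp hφt)).div_const 2
  have hpm : dist p m = a := by
    refine tendsto_nhds_unique ((hPt.comp hφt).dist hm) ?_
    simpa only [Function.comp_apply, hPM] using hht
  have hmq : dist m q = a := by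
    refine tendsto_nhds_unique (hm.dist (hQt.comp hφt)) ?_
    simpa only [Function.comp_apply, hMQ] using hht
  have hxm : D ≤ dist x m := hmid m (by rw [hpm, ha]) (by rw [hmq, ha])
  have hδt : Filter.Tendsto (fun n => dist m (M (φ n))) Filter.atTop (nhds 0) := by
    simpa using (tendsto_const_nhds (x := m)).dist hm
  have hest : ∀ k, a ^ 2 * (dist (P k) (Q k) / 2)
      ≤ D * dist m (M k) * a + D * (dist (P k) (Q k) / 2) * e k := fun k => by
    have p1 := hpt x m (P k) (Q k)
    have p2 := hpt (P k) m p (M k)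
    have p3 := hpt (Q k) m q (M k)
    have t1 := dist_triangle p (P k) (M k)
    have t2 := dist_triangle (P k) p (M k)
    have t3 := dist_triangle q (Q k) (M k)
    have t4 := dist_triangle (Q k) q (M k)
    have t5 := dist_triangle p (M k) q
    rw [dist_comm (M k) q] at t5
    rw [dist_comm (P k) p] at t2 p2
    rw [dist_comm (Q k) q] at t4 p3
    rw [dist_comm m p] at p2
    rw [dist_comm m (P k), dist_comm m (Q k), hxP, hxQ] at p1
    have hQM : dist (Q k) (M k) = dist (P k) (Q k) / 2 := by rw [dist_comm, hMQ]
    rw [hpP, hPM] at t1 t2 p2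
    rw [hqQ, hQM] at t3 t4 p3
    rw [hpm] at p2
    rw [hmq] at p3
    refine ptolemy_estimate (U := dist (P k) m) (V := dist (Q k) m) (A := dist p (M k))
      (B := dist q (M k)) (hepos k) (hea k) ((hea k).le.trans hDa) dist_nonneg (by positivity)
      ?_ ?_ ?_ ?_ ?_ ?_
    · have := mul_le_mul_of_nonneg_right hxm (dist_nonneg (x := P k) (y := Q k))
      linarith
    · linarith
    · linarith
    · linarith
    · linarith
    · linarith
  have hlim : a ^ 2 * a ≤ D * 0 * a + D * a * 0 :=
    le_of_tendsto_of_tendsto' (hht.const_mul _)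
      (((hδt.const_mul D).mul_const a).add ((hht.const_mul D).mul (he0.comp hφt)))
      (fun n => hest (φ n))
  have : 0 < a ^ 2 * a := by positivity
  linarith

/-- **Corollary 2.5.** In a proper geodesic Ptolemy metric space, for every nonempty closed
convex subset `A` every point `x` has a unique nearest point `π(x)` in `A`, and the
nearest-point projection `π : X → A` is continuous. -/
theorem nearest_point_projection_of_proper_geodesic_ptolemy
    {X : Type*} [MetricSpace X] [ProperSpace X]
    (hgeo : IsGeodesicSpace X) (hpt : IsPtolemy X)
    (A : Set X) (hAcl : IsClosed A) (hAconv : MidpointConvexSet A) (hAne : A.Nonempty) :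
    ∃ π : X → X, Continuous π ∧
      ∀ x : X, π x ∈ A ∧ dist x (π x) = Metric.infDist x A ∧
        ∀ a ∈ A, dist x a = Metric.infDist x A → a = π x := by
  have hex : ∀ x : X, ∃ a ∈ A, Metric.infDist x A = dist x a :=
    fun x => hAcl.exists_infDist_eq_dist hAne x
  choose π hπA hπd using hex
  have huniq : ∀ x : X, ∀ a ∈ A, dist x a = Metric.infDist x A → a = π x := fun x a ha hxa =>
    eq_of_midpoints_far hgeo hpt hxa (hπd x).symm
      fun m h1 h2 => Metric.infDist_le_dist_of_mem (hAconv a ha _ (hπA x) m h1 h2)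
  refine ⟨π, ?_, fun x => ⟨hπA x, (hπd x).symm, huniq x⟩⟩
  -- Limit points of `π (u n)`, for `u n → x`, are nearest points of `x`, hence equal to `π x`.
  refine continuous_iff_continuousAt.2 fun x => Filter.tendsto_of_seq_tendsto fun u hu => ?_
  refine Filter.tendsto_of_subseq_tendsto fun ns hns => ?_
  have hv : Filter.Tendsto (fun n => u (ns n)) Filter.atTop (nhds x) := hu.comp hns
  obtain ⟨R, hR⟩ := (Metric.isBounded_range_of_tendsto _ hv).subset_closedBall x
  obtain ⟨a₀, ha₀⟩ := hAne
  have hb : ∀ n, π (u (ns n)) ∈ Metric.closedBall x (R + (R + dist x a₀)) := fun n => by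
    have h1 : dist (u (ns n)) x ≤ R := hR ⟨n, rfl⟩
    have h2 := Metric.infDist_le_dist_of_mem (x := u (ns n)) ha₀
    have h3 := dist_triangle (u (ns n)) x a₀
    have h4 := dist_triangle x (u (ns n)) (π (u (ns n)))
    rw [Metric.mem_closedBall, dist_comm]
    rw [dist_comm x (u (ns n)), ← hπd] at h4
    linarith
  obtain ⟨b, -, φ, hφ, hφb⟩ := tendsto_subseq_of_bounded Metric.isBounded_closedBall hb
  refine ⟨φ, ?_⟩
  have hvφ := hv.comp hφ.tendsto_atTop
  have hbA : b ∈ A := hAcl.mem_of_tendsto hφb (.of_forall fun n => hπA _)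
  have hbd : dist x b = Metric.infDist x A := by
    refine tendsto_nhds_unique (hvφ.dist hφb) ?_
    have := ((Metric.continuous_infDist_pt A).tendsto x).comp hvφ
    simpa only [Function.comp_def, ← hπd] using this
  rw [← huniq x b hbA hbd]
  exact hφb
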